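/- Let f₁,…,f_n be monotone nondecreasing linear functions (α(f_i) ≥ 0 for all i). A permutation σ of [n] is optimal (β(f^σ) ≤ β(f^ρ) for every permutation ρ) if and only if σ is locally optimal (β(f^σ) ≤ β(f^μ) for every μ in the neighborhood N(σ)). -/

import Mathlib

/-- A linear function `x ↦ a*x + b`. -/
structure LinFun where
  a : ℝ
  b : ℝ

namespace LinFun

/-- Evaluation of a linear function. -/
def eval (f : LinFun) (x : ℝ) : ℝ := f.a * x + f.b

/-- Composition: `h.comp g` is the linear function `x ↦ h (g x)`. -/
def comp (h g : LinFun) : LinFun := ⟨h.a * g.a, h.a * g.b + h.b⟩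

/-- The identical linear function `x ↦ x`. -/
def idf : LinFun := ⟨1, 0⟩

/-- `f` is the identical function (equivalently, its vector `(β f, 1 - α f)` is `(0,0)`,
i.e. its angle is `⊥`). -/
def IsId (f : LinFun) : Prop := f = idf

/-- The Euclidean norm of the vector `(β f, 1 - α f)` associated to `f`. -/
noncomputable def vecNorm (f : LinFun) : ℝ := Real.sqrt (f.b ^ 2 + (1 - f.a) ^ 2)

/-- The polar angle in `[0, 2π)` of the vector `(β f, 1 - α f)` associated to `f`
(meaningful only when `f` is not identical). -/
noncomputable def theta (f : LinFun) : ℝ :=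
  if 0 ≤ Complex.arg ⟨f.b, 1 - f.a⟩ then Complex.arg ⟨f.b, 1 - f.a⟩
  else Complex.arg ⟨f.b, 1 - f.a⟩ + 2 * Real.pi

end LinFun

/-- Congruence of angles modulo `2π`: `x ≡_{2π} y`. -/
def Cong (x y : ℝ) : Prop := ∃ k : ℤ, x - y = 2 * Real.pi * k

/-- The set `[t1, t2]_{2π}`. -/
def Icc2pi (t1 t2 : ℝ) : Set ℝ :=
  {θ | ∃ l1 l2 : ℝ, Cong l1 t1 ∧ Cong l2 t2 ∧ 0 ≤ l2 - l1 ∧ l2 - l1 < 2 * Real.pi ∧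
    θ ∈ Set.Icc l1 l2}

/-- The set `(t1, t2)_{2π}`. -/
def Ioo2pi (t1 t2 : ℝ) : Set ℝ :=
  {θ | ∃ l1 l2 : ℝ, Cong l1 t1 ∧ Cong l2 t2 ∧ 0 ≤ l2 - l1 ∧ l2 - l1 < 2 * Real.pi ∧
    θ ∈ Set.Ioo l1 l2}

/-- Composite of a list of linear functions: `compList [g₁, …, g_m] = g_m ∘ ⋯ ∘ g₁`. -/
def compList (L : List LinFun) : LinFun := L.foldl (fun acc g => g.comp acc) LinFun.idf

/-- The list `f_{σ(1)}, …, f_{σ(n)}` (0-indexed positions). -/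
def permList {n : ℕ} (f : Fin n → LinFun) (σ : Equiv.Perm (Fin n)) : List LinFun :=
  List.ofFn fun i => f (σ i)

/-- `f^σ = f_{σ(n)} ∘ ⋯ ∘ f_{σ(1)}`. -/
def permComp {n : ℕ} (f : Fin n → LinFun) (σ : Equiv.Perm (Fin n)) : LinFun :=
  compList (permList f σ)

/-- The composite of the functions at the (0-indexed) positions `a, a+1, …, b` of `σ`:
`f_{σ(b)} ∘ ⋯ ∘ f_{σ(a)}` (in 0-indexed notation). -/
def segComp {n : ℕ} (f : Fin n → LinFun) (σ : Equiv.Perm (Fin n)) (a b : ℕ) : LinFun :=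
  compList (((permList f σ).drop a).take (b + 1 - a))

/-- The composite corresponding to the `k`-shift `σ_k` of `σ`:
`f^{σ_k} = f_{σ(k)} ∘ ⋯ ∘ f_{σ(1)} ∘ f_{σ(n)} ∘ ⋯ ∘ f_{σ(k+1)}` (1-indexed notation). -/
def shiftComp {n : ℕ} (f : Fin n → LinFun) (σ : Equiv.Perm (Fin n)) (k : ℕ) : LinFun :=
  compList ((permList f σ).rotate k)

/-- `σ` is a minimum (optimal) permutation for `f₁, …, f_n`. -/
def IsMinimum {n : ℕ} (f : Fin n → LinFun) (σ : Equiv.Perm (Fin n)) : Prop :=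
  ∀ ρ : Equiv.Perm (Fin n), (permComp f σ).b ≤ (permComp f ρ).b

/-- `μ` belongs to the neighbourhood `N(σ)`: it is obtained from `σ` by swapping two
adjacent blocks of positions, `(l, …, m)` and `(m+1, …, r)` (0-indexed, `l ≤ m < r < n`). -/
def InNbhd {n : ℕ} (σ μ : Equiv.Perm (Fin n)) : Prop :=
  ∃ (l m r : ℕ) (_ : l ≤ m) (_ : m < r) (_ : r < n),
    (∀ i : Fin n, (i.val < l ∨ r < i.val) → μ i = σ i) ∧
    (∀ i : Fin n, ∀ _ : l ≤ i.val, ∀ _ : i.val < l + r - m,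
      μ i = σ ⟨i.val + m + 1 - l, by omega⟩) ∧
    (∀ i : Fin n, ∀ _ : l + r - m ≤ i.val, ∀ _ : i.val ≤ r,
      μ i = σ ⟨i.val + m - r, by omega⟩)

/-- `σ` is locally optimal for `f₁, …, f_n`. -/
def LocallyOptimal {n : ℕ} (f : Fin n → LinFun) (σ : Equiv.Perm (Fin n)) : Prop :=
  ∀ μ : Equiv.Perm (Fin n), InNbhd σ μ → (permComp f σ).b ≤ (permComp f μ).b

/-- `σ` is counterclockwise: ignoring the identical functions, some rotation of the sequence
of angles `θ(f_{σ(1)}), …, θ(f_{σ(n)})` is nondecreasing. -/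
def Counterclockwise {n : ℕ} (f : Fin n → LinFun) (σ : Equiv.Perm (Fin n)) : Prop :=
  ∃ c : ℕ, ∀ i j : Fin n, ¬ (f (σ i)).IsId → ¬ (f (σ j)).IsId →
    ((c ≤ i.val ∧ i ≤ j) ∨ (i ≤ j ∧ j.val < c) ∨ (c ≤ i.val ∧ j.val < c)) →
    (f (σ i)).theta ≤ (f (σ j)).theta

/-- `f₁, …, f_n` are colinear: all vectors lie on one line through the origin. -/
def Colinear {n : ℕ} (f : Fin n → LinFun) : Prop :=
  ∃ lam : ℝ, ∀ i : Fin n,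
    (f i).IsId ∨ Cong ((f i).theta) lam ∨ Cong ((f i).theta) (lam + Real.pi)

/-- `f₁, …, f_n` are potentially identical: some counterclockwise permutation composes
to the identical function. -/
def PotentiallyIdentical {n : ℕ} (f : Fin n → LinFun) : Prop :=
  ∃ σ : Equiv.Perm (Fin n), Counterclockwise f σ ∧ (permComp f σ).IsId

/-- The ε-perturbation `f^{(ε)}` of a linear function. -/
noncomputable def epsPert (f : LinFun) (ε : ℝ) : LinFun := if f.a = 0 then ⟨ε, f.b⟩ else f

/-!
Attach to each linear function the vector `(β f, 1 - α f)`. Swapping two adjacent blocks changes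
the constant term by the wedge product of the vectors of their composites, times the slope of what
comes after. For positive slopes, local optimality therefore says that the suitably rescaled vectors
are the successive edges of a convex polygonal path; in particular the direction of no vector lies
strictly between those of two consecutive ones.

Fix a pivot `x`: the last function of slope zero or, failing that, the first function. Let `y`
follow `x` in the locally optimal order and `w` follow `x` in an optimal one. Neither of `y`, `w`
lies between `x` and the other, so they are parallel, and `y` can be moved next to `x` in the
optimal order without changing its value. Merging `x` and `y` into one function preserves local
optimality, so induction on the number of functions applies. What remains are the degenerate cases
in which `x` is identical, comes last, or is parallel to everything after it.
-/

section Wedge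

variable {R : Type*} [CommRing R]

/-- The two-dimensional wedge product (signed area), used to compare the directions of the vectors
`(β f, 1 - α f)` without angles. -/
def wedge (u v : R × R) : R := u.1 * v.2 - u.2 * v.1

variable (u v w : R × R)

theorem wedge_self : wedge u u = 0 := by
  simp only [wedge]; ring

theorem neg_wedge : -wedge u v = wedge v u := by
  simp only [wedge]; ring

theorem wedge_swap_swap : wedge u.swap v.swap = wedge v u := by
  simp only [wedge, Prod.fst_swap, Prod.snd_swap]; ring

theorem wedge_add_left : wedge (u + v) w = wedge u w + wedge v w := by
  simp only [wedge, Prod.fst_add, Prod.snd_add]; ring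

theorem wedge_add_right : wedge u (v + w) = wedge u v + wedge u w := by
  simp only [wedge, Prod.fst_add, Prod.snd_add]; ring

theorem wedge_smul_left (r : R) : wedge (r • u) v = r * wedge u v := by
  simp only [wedge, Prod.smul_fst, Prod.smul_snd, smul_eq_mul]; ring

theorem wedge_smul_right (r : R) : wedge u (r • v) = r * wedge u v := by
  simp only [wedge, Prod.smul_fst, Prod.smul_snd, smul_eq_mul]; ring

theorem wedge_smul_eq_add : wedge u v • w = wedge w v • u + wedge u w • v := by
  ext <;> simp only [wedge, Prod.fst_add, Prod.snd_add, Prod.smul_fst, Prod.smul_snd, smul_eq_mul]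
    <;> ring

theorem wedge_eq_zero_of_wedge_eq_zero [IsDomain R] {u v w : R × R} (hw : w ≠ 0)
    (hu : wedge w u = 0) (hv : wedge w v = 0) : wedge u v = 0 := by
  have h : wedge u v • w = 0 := by
    rw [wedge_smul_eq_add, hv, ← neg_wedge, hu, neg_zero, zero_smul, zero_smul, add_zero]
  exact (smul_eq_zero.1 h).resolve_right hw

end Wedge

section OrderedRing

variable {R : Type*} [CommRing R] [LinearOrder R] [IsStrictOrderedRing R] {u v q x y k : R × R}

theorem sameRay_of_wedge_eq_zero (huv : wedge u v = 0) (hu : 0 < wedge x u) (hv : 0 < wedge x v) :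
    SameRay R u v :=
  Or.inr <| Or.inr ⟨wedge x v, wedge x u, hv, hu, by
    rw [wedge_smul_eq_add x v u, huv, zero_smul, zero_add]⟩

/-- The edges `x`, `y`, `q`, `k` follow each other on a convex polygon traversed counterclockwise:
no later edge `k` points strictly between the directions of the consecutive edges `x` and `y`. -/
theorem wedge_nonpos_of_convex (hxy : 0 < wedge x y) (hyq : 0 ≤ wedge y q)
    (hx_yq : 0 ≤ wedge x (y + q)) (hxy_q : 0 ≤ wedge (x + y) q) (hyq_k : 0 ≤ wedge (y + q) k)
    (hxk : 0 < wedge x k) : wedge k y ≤ 0 := by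
  by_contra! hky
  have hcramer : wedge x y * wedge (y + q) k =
      -(wedge y q * wedge x k) - wedge x (y + q) * wedge k y := by
    simp only [wedge, Prod.fst_add, Prod.snd_add]; ring
  have hleft : 0 ≤ wedge x y * wedge (y + q) k := by positivity
  have hfst : 0 ≤ wedge y q * wedge x k := by positivity
  have hsnd : 0 ≤ wedge x (y + q) * wedge k y := by positivity
  have hyq_zero : wedge y q = 0 :=
    (mul_eq_zero.1 (by linarith : wedge y q * wedge x k = 0)).resolve_right hxk.ne'
  have hx_yq_zero : wedge x (y + q) = 0 :=
    (mul_eq_zero.1 (by linarith : wedge x (y + q) * wedge k y = 0)).resolve_right hky.ne'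
  rw [wedge_add_right] at hx_yq_zero
  rw [wedge_add_left] at hxy_q
  linarith

theorem wedge_nonpos_of_convex_swap (hxy : 0 < wedge x y) (hqx : 0 ≤ wedge q x)
    (hqx_y : 0 ≤ wedge (q + x) y) (hq_xy : 0 ≤ wedge q (x + y)) (hk_qx : 0 ≤ wedge k (q + x))
    (hky : 0 < wedge k y) : wedge x k ≤ 0 := by
  rw [← wedge_swap_swap] at hxy hqx hqx_y hq_xy hk_qx hky ⊢
  rw [add_comm, Prod.swap_add] at hqx_y hk_qx hq_xy
  exact wedge_nonpos_of_convex hxy hqx hqx_y hq_xy hk_qx hky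

end OrderedRing

section OrderedField

variable {𝕜 : Type*} [Field 𝕜] [LinearOrder 𝕜] [IsStrictOrderedRing 𝕜] {u v q : 𝕜 × 𝕜}

theorem sameRay_or_sameRay_neg_of_wedge_eq_zero (hu : u ≠ 0) (huv : wedge u v = 0) :
    SameRay 𝕜 u v ∨ SameRay 𝕜 u (-v) := by
  obtain ⟨r, rfl⟩ : ∃ r : 𝕜, v = r • u := by
    have hnorm : u.1 ^ 2 + u.2 ^ 2 ≠ 0 := fun h ↦ hu <| Prod.ext
      (by simpa using (by nlinarith [sq_nonneg u.1, sq_nonneg u.2] : u.1 ^ 2 = 0))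
      (by simpa using (by nlinarith [sq_nonneg u.1, sq_nonneg u.2] : u.2 ^ 2 = 0))
    refine ⟨(u.1 * v.1 + u.2 * v.2) / (u.1 ^ 2 + u.2 ^ 2), ?_⟩
    simp only [wedge] at huv
    ext <;> simp only [Prod.smul_fst, Prod.smul_snd, smul_eq_mul] <;> field_simp
    · linear_combination -u.2 * huv
    · linear_combination u.1 * huv
  rcases le_total 0 r with hr | hr
  · exact .inl (SameRay.sameRay_nonneg_smul_right u hr)
  · rw [← neg_smul]
    exact .inr (SameRay.sameRay_nonneg_smul_right u (neg_nonneg.2 hr))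

theorem wedge_eq_zero_of_sameRay (h : SameRay 𝕜 u v) : wedge u v = 0 := by
  obtain ⟨w, r, s, -, -, -, rfl, rfl⟩ := h.exists_eq_smul
  rw [wedge_smul_left, wedge_smul_right, wedge_self, mul_zero, mul_zero]

theorem wedge_eq_zero_of_sameRay_left (h : SameRay 𝕜 u v) (hv : v ≠ 0) (huq : 0 ≤ wedge u q)
    (hqv : 0 ≤ wedge q v) : wedge u q = 0 := by
  obtain ⟨r, hr, rfl⟩ := h.exists_nonneg_right hv
  rw [wedge_smul_left] at huq ⊢
  rw [← neg_wedge] at hqv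
  nlinarith

theorem wedge_eq_zero_of_sameRay_right (h : SameRay 𝕜 u v) (hu : u ≠ 0) (huq : 0 ≤ wedge u q)
    (hqv : 0 ≤ wedge q v) : wedge q v = 0 := by
  obtain ⟨r, hr, rfl⟩ := h.exists_nonneg_left hu
  rw [wedge_smul_right, ← neg_wedge] at hqv ⊢
  nlinarith

end OrderedField

namespace LinFun

/-- The vector `(β f, 1 - α f)` of which `LinFun.theta` is the polar angle. -/
def vec (f : LinFun) : ℝ × ℝ := (f.b, 1 - f.a)

variable (f g h : LinFun)

theorem comp_assoc : (h.comp g).comp f = h.comp (g.comp f) := by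
  simp only [comp, mk.injEq]
  constructor <;> ring

theorem comp_idf : f.comp idf = f := by
  simp [comp, idf]

theorem idf_comp : idf.comp f = f := by
  simp [comp, idf]

theorem eval_comp (c : ℝ) : (h.comp g).eval c = h.eval (g.eval c) := by
  simp only [comp, eval]; ring

theorem vec_comp : (h.comp g).vec = h.a • g.vec + h.vec := by
  simp only [vec, comp, Prod.smul_mk, Prod.mk_add_mk, smul_eq_mul, Prod.mk.injEq, true_and]
  ring

variable {f g}

theorem vec_eq_zero_iff : f.vec = 0 ↔ f = idf := by
  rcases f with ⟨a, b⟩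
  simp only [vec, idf, Prod.mk_eq_zero, mk.injEq, sub_eq_zero, eq_comm (a := (1 : ℝ)), and_comm]

theorem vec_ne_zero_of_a_eq_zero (hf : f.a = 0) : f.vec ≠ 0 := fun h ↦ by
  simpa [vec, hf] using congrArg Prod.snd h

theorem wedge_vec_of_a_eq_zero (hf : f.a = 0) : wedge g.vec f.vec = g.eval f.b - f.b := by
  simp only [wedge, vec, eval, hf]; ring

theorem comp_comm_of_wedge_eq_zero (h : wedge f.vec g.vec = 0) : f.comp g = g.comp f := by
  simp only [wedge, vec] at h
  simp only [comp, mk.injEq]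
  constructor
  · ring
  · linear_combination h

end LinFun

open LinFun

section CompList

variable (A B : List LinFun) (x y : LinFun) {L L' : List LinFun}

theorem compList_concat : compList (A ++ [x]) = x.comp (compList A) := by
  simp [compList]

theorem compList_singleton : compList [x] = x :=
  comp_idf x

theorem compList_append : compList (A ++ B) = (compList B).comp (compList A) := by
  induction B using List.reverseRecOn with
  | nil => rw [List.append_nil]; exact (idf_comp _).symm
  | append_singleton B x ih =>
    rw [← List.append_assoc, compList_concat, ih, compList_concat, comp_assoc]

theorem compList_cons : compList (x :: A) = (compList A).comp x := by
  rw [← List.singleton_append, compList_append, compList_singleton]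

theorem compList_flatten (M : List (List LinFun)) :
    compList M.flatten = compList (M.map compList) := by
  induction M with
  | nil => rfl
  | cons A M ih => rw [List.flatten_cons, compList_append, ih, List.map_cons, compList_cons]

theorem compList_merge : compList (A ++ y.comp x :: B) = compList (A ++ x :: y :: B) := by
  simp only [compList_append, compList_cons, comp_assoc]

theorem vec_compList_append :
    (compList (A ++ B)).vec = (compList B).a • (compList A).vec + (compList B).vec := by
  rw [compList_append, vec_comp]

theorem compList_a : (compList L).a = (L.map LinFun.a).prod := by
  induction L with
  | nil => rfl
  | cons x L ih => rw [compList_cons, List.map_cons, List.prod_cons, ← ih, mul_comm]; rfl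

theorem compList_a_pos (hL : ∀ g ∈ L, 0 < g.a) : 0 < (compList L).a := by
  rw [compList_a]
  exact List.prod_pos (by simpa using hL)

theorem compList_eval_of_mem_a_eq_zero {x : LinFun} (hxL : x ∈ L) (hx : x.a = 0) (c : ℝ) :
    (compList L).eval c = (compList L).b := by
  have ha : (compList L).a = 0 := by
    rw [compList_a]
    exact List.prod_eq_zero (List.mem_map.2 ⟨x, hxL, hx⟩)
  rw [eval, ha, zero_mul, zero_add]

theorem le_compList_eval {c : ℝ} (hL : ∀ g ∈ L, 0 ≤ g.a) (hc : ∀ g ∈ L, c ≤ g.eval c) :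
    c ≤ (compList L).eval c := by
  induction L using List.reverseRecOn with
  | nil => simp [compList, idf, eval]
  | append_singleton L x ih =>
    simp only [List.mem_append, List.mem_singleton, or_imp, forall_and, forall_eq] at hL hc
    rw [compList_concat, eval_comp]
    refine hc.2.trans ?_
    have := mul_le_mul_of_nonneg_left (ih hL.1 hc.1) hL.2
    simpa only [eval, add_le_add_iff_right] using this

theorem compList_eq_of_perm (hp : L'.Perm L)
    (hL : ∀ f ∈ L, ∀ g ∈ L, wedge f.vec g.vec = 0) : compList L' = compList L := by
  refine hp.foldl_eq' (fun f hf g hg k ↦ ?_) _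
  have hcomm := comp_comm_of_wedge_eq_zero (hL f (hp.mem_iff.1 hf) g (hp.mem_iff.1 hg))
  rw [← comp_assoc, ← comp_assoc, hcomm]

theorem compList_swap_b (P A B S : List LinFun) :
    (compList (P ++ B ++ A ++ S)).b = (compList (P ++ A ++ B ++ S)).b +
      (compList S).a * wedge (compList A).vec (compList B).vec := by
  simp only [compList_append, comp, wedge, vec]; ring

theorem perm_swap_blocks {α : Type*} (P A B S : List α) :
    (P ++ B ++ A ++ S).Perm (P ++ A ++ B ++ S) := by
  simpa only [List.append_assoc] using
    List.Perm.append_left P (by simpa using List.Perm.append_right S List.perm_append_comm)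

end CompList

section Minimality

/-- Swapping two adjacent blocks of the list does not decrease the constant term of its composite:
local optimality for lists. Blocks may be empty. -/
def IsSwapMinimum (L : List LinFun) : Prop :=
  ∀ P A B S, L = P ++ A ++ B ++ S → (compList L).b ≤ (compList (P ++ B ++ A ++ S)).b

/-- Reordering the list does not decrease the constant term of its composite: global optimality
for lists. -/
def IsPermMinimum (L : List LinFun) : Prop :=
  ∀ L' : List LinFun, L'.Perm L → (compList L).b ≤ (compList L').b

/-- `L` is a reordering of `L'` whose composite has the same constant term. -/
def NeutralPerm (L L' : List LinFun) : Prop :=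
  L.Perm L' ∧ (compList L).b = (compList L').b

variable {L L' P Q S T : List LinFun} {x y w k : LinFun}

theorem NeutralPerm.trans {L₁ L₂ L₃ : List LinFun} (h : NeutralPerm L₁ L₂)
    (h' : NeutralPerm L₂ L₃) : NeutralPerm L₁ L₃ :=
  ⟨h.1.trans h'.1, h.2.trans h'.2⟩

theorem neutralPerm_swap {A B : List LinFun}
    (h : wedge (compList A).vec (compList B).vec = 0) :
    NeutralPerm (P ++ B ++ A ++ S) (P ++ A ++ B ++ S) :=
  ⟨perm_swap_blocks P A B S, by rw [compList_swap_b, h, mul_zero, add_zero]⟩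

theorem neutralPerm_swap_pair (h : wedge x.vec y.vec = 0) :
    NeutralPerm (P ++ y :: x :: S) (P ++ x :: y :: S) := by
  simpa using neutralPerm_swap (P := P) (S := S) (A := [x]) (B := [y])
    (by simpa only [compList_singleton] using h)

theorem IsPermMinimum.of_perm_of_le (h : IsPermMinimum L) (hp : L'.Perm L)
    (hle : (compList L').b ≤ (compList L).b) : IsPermMinimum L' :=
  fun M hM ↦ hle.trans (h M (hM.trans hp))

theorem exists_isPermMinimum (L : List LinFun) : ∃ L', L'.Perm L ∧ IsPermMinimum L' := by
  classical
  obtain ⟨M, hM, hmin⟩ :=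
    Finset.exists_min_image L.permutations.toFinset (fun L' ↦ (compList L').b) ⟨L, by simp⟩
  simp only [List.mem_toFinset, List.mem_permutations] at hM hmin
  exact ⟨M, hM, fun L' hL' ↦ hmin L' (hL'.trans hM)⟩

theorem IsPermMinimum.isSwapMinimum (h : IsPermMinimum L) : IsSwapMinimum L := by
  rintro P A B S rfl
  exact h _ (perm_swap_blocks P A B S)

theorem isSwapMinimum_iff :
    IsSwapMinimum L ↔ ∀ P A B S, L = P ++ A ++ B ++ S →
      0 ≤ (compList S).a * wedge (compList A).vec (compList B).vec := by
  refine forall₄_congr fun P A B S ↦ forall_congr' ?_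
  rintro rfl
  rw [compList_swap_b P A B S, le_add_iff_nonneg_right]

namespace IsSwapMinimum

theorem of_append (h : IsSwapMinimum (Q ++ L)) : IsSwapMinimum L := by
  rw [isSwapMinimum_iff] at h ⊢
  rintro P A B S rfl
  exact h (Q ++ P) A B S (by simp)

theorem wedge_nonneg (h : IsSwapMinimum L) (P A B S : List LinFun) (hL : L = P ++ A ++ B ++ S)
    (hS : ∀ g ∈ S, 0 < g.a) : 0 ≤ wedge (compList A).vec (compList B).vec :=
  nonneg_of_mul_nonneg_right (isSwapMinimum_iff.1 h P A B S hL) (compList_a_pos hS)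

theorem map_compList {M : List (List LinFun)} (h : IsSwapMinimum M.flatten) :
    IsSwapMinimum (M.map compList) := by
  rw [isSwapMinimum_iff] at h ⊢
  intro P A B S hM
  obtain ⟨_, S', rfl, hPAB, rfl⟩ := List.map_eq_append_iff.1 hM
  obtain ⟨_, B', rfl, hPA, rfl⟩ := List.map_eq_append_iff.1 hPAB
  obtain ⟨P', A', rfl, rfl, rfl⟩ := List.map_eq_append_iff.1 hPA
  simpa only [compList_flatten] using
    h P'.flatten A'.flatten B'.flatten S'.flatten (by simp only [List.flatten_append])

theorem merge (h : IsSwapMinimum (P ++ x :: y :: S)) : IsSwapMinimum (P ++ y.comp x :: S) := by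
  have hblocks := map_compList (M := P.map ([·]) ++ [x, y] :: S.map ([·]))
    (by simpa [← List.flatMap_def] using h)
  have hpair : compList [x, y] = y.comp x := by rw [compList_cons, compList_singleton]
  simpa [Function.comp_def, compList_singleton, hpair] using hblocks

theorem wedge_nonpos_of_mem_right (h : IsSwapMinimum (P ++ x :: y :: S))
    (hyS : ∀ g ∈ y :: S, 0 < g.a) (hxy : 0 < wedge x.vec y.vec) (hk : k ∈ S)
    (hxk : 0 < wedge x.vec k.vec) : wedge k.vec y.vec ≤ 0 := by
  obtain ⟨Q, R, rfl⟩ := List.append_of_mem hk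
  have hy : 0 < y.a := hyS y (by simp)
  have hQ : 0 < (compList Q).a := compList_a_pos fun g hg ↦ hyS g (by simp [hg])
  have hkR : ∀ g ∈ k :: R, 0 < g.a := fun g hg ↦ hyS g (by simp_all)
  have hy_Q := h.wedge_nonneg (P ++ [x]) [y] Q (k :: R) (by simp) hkR
  have hx_yQ := h.wedge_nonneg P [x] ([y] ++ Q) (k :: R) (by simp) hkR
  have hxy_Q := h.wedge_nonneg P ([x] ++ [y]) Q (k :: R) (by simp) hkR
  have hyQ_k := h.wedge_nonneg (P ++ [x]) ([y] ++ Q) [k] R (by simp)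
    fun g hg ↦ hkR g (List.mem_cons_of_mem k hg)
  simp only [vec_compList_append, compList_singleton] at hy_Q hx_yQ hxy_Q hyQ_k
  set q := compList Q
  have hscaled := wedge_nonpos_of_convex (x := (q.a * y.a) • x.vec) (y := q.a • y.vec)
    (q := q.vec) (k := k.vec) (by rw [wedge_smul_left, wedge_smul_right]; positivity)
    (by rw [wedge_smul_left]; positivity) (by rw [wedge_smul_left]; positivity)
    (by rw [mul_smul, ← smul_add, wedge_smul_left]; positivity) hyQ_k
    (by rw [wedge_smul_left]; positivity)
  rw [wedge_smul_right] at hscaled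
  exact nonpos_of_mul_nonpos_right hscaled hQ

theorem wedge_nonpos_of_mem_left (h : IsSwapMinimum (P ++ x :: y :: S)) (hx : 0 ≤ x.a)
    (hyS : ∀ g ∈ y :: S, 0 < g.a) (hxy : 0 < wedge x.vec y.vec) (hk : k ∈ P)
    (hxk : 0 < wedge x.vec k.vec) : wedge k.vec y.vec ≤ 0 := by
  obtain ⟨R, Q, rfl⟩ := List.append_of_mem hk
  have hy : 0 < y.a := hyS y (by simp)
  have hS : ∀ g ∈ S, 0 < g.a := fun g hg ↦ hyS g (List.mem_cons_of_mem y hg)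
  have hQ_x := h.wedge_nonneg (R ++ [k]) Q [x] (y :: S) (by simp) hyS
  have hQx_y := h.wedge_nonneg (R ++ [k]) (Q ++ [x]) [y] S (by simp) hS
  have hQ_xy := h.wedge_nonneg (R ++ [k]) Q ([x] ++ [y]) S (by simp) hS
  have hk_Qx := h.wedge_nonneg R [k] (Q ++ [x]) (y :: S) (by simp) hyS
  simp only [vec_compList_append, compList_singleton] at hQ_x hQx_y hQ_xy hk_Qx
  set q := compList Q
  by_contra! hky
  have hscaled := wedge_nonpos_of_convex_swap (q := (y.a * x.a) • q.vec) (x := y.a • x.vec)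
    (y := y.vec) (k := k.vec) (by rw [wedge_smul_left]; positivity)
    (by rw [wedge_smul_left, wedge_smul_right]; positivity)
    (by rw [mul_smul, ← smul_add, wedge_smul_left]; positivity)
    (by rw [wedge_smul_left]; positivity)
    (by rw [mul_smul, ← smul_add, wedge_smul_right]; positivity) hky
  rw [wedge_smul_left] at hscaled
  exact hxk.not_ge (nonpos_of_mul_nonpos_right hscaled hy)

theorem wedge_nonpos_of_mem (h : IsSwapMinimum (P ++ x :: y :: S)) (hx : 0 ≤ x.a)
    (hyS : ∀ g ∈ y :: S, 0 < g.a) (hxy : 0 < wedge x.vec y.vec) (hk : k ∈ P ++ x :: y :: S)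
    (hxk : 0 < wedge x.vec k.vec) : wedge k.vec y.vec ≤ 0 := by
  simp only [List.mem_append, List.mem_cons] at hk
  rcases hk with hk | rfl | rfl | hk
  · exact h.wedge_nonpos_of_mem_left hx hyS hxy hk hxk
  · exact absurd (wedge_self _) hxk.ne'
  · exact (wedge_self _).le
  · exact h.wedge_nonpos_of_mem_right hyS hxy hk hxk

theorem neutralPerm_move_left (h : IsSwapMinimum (P ++ x :: (Q ++ y :: S)))
    (hyS : ∀ g ∈ y :: S, 0 < g.a) (hxy : SameRay ℝ x.vec y.vec) (hx : x.vec ≠ 0) :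
    NeutralPerm (P ++ x :: y :: (Q ++ S)) (P ++ x :: (Q ++ y :: S)) := by
  have hx_Q := h.wedge_nonneg P [x] Q (y :: S) (by simp) hyS
  have hQ_y := h.wedge_nonneg (P ++ [x]) Q [y] S (by simp) fun g hg ↦
    hyS g (List.mem_cons_of_mem y hg)
  rw [compList_singleton] at hx_Q
  have hswap := wedge_eq_zero_of_sameRay_right hxy hx hx_Q (by rwa [compList_singleton] at hQ_y)
  simpa using neutralPerm_swap (P := P ++ [x]) (S := S) (A := Q) (B := [y])
    (by rwa [compList_singleton])

theorem neutralPerm_move_right (h : IsSwapMinimum (P ++ y :: (Q ++ x :: S))) (hxa : 0 ≤ x.a)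
    (hS : ∀ g ∈ S, 0 < g.a) (hyx : SameRay ℝ y.vec x.vec) (hx : x.vec ≠ 0) :
    NeutralPerm (P ++ (Q ++ x :: y :: S)) (P ++ y :: (Q ++ x :: S)) := by
  have hswap : wedge y.vec (compList (Q ++ [x])).vec = 0 := by
    rw [vec_compList_append, compList_singleton, wedge_add_right, wedge_smul_right,
      wedge_eq_zero_of_sameRay hyx, add_zero, mul_eq_zero, or_iff_not_imp_left]
    intro hxa'
    have hy_Q := h.wedge_nonneg P [y] Q (x :: S) (by simp)
      (List.forall_mem_cons.2 ⟨hxa.lt_of_ne' hxa', hS⟩)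
    have hQ_x := h.wedge_nonneg (P ++ [y]) Q [x] S (by simp) hS
    rw [compList_singleton] at hy_Q hQ_x
    exact wedge_eq_zero_of_sameRay_left hyx hx hy_Q hQ_x
  simpa using neutralPerm_swap (P := P) (S := S) (A := [y]) (B := Q ++ [x])
    (by rwa [compList_singleton])

end IsSwapMinimum

/-- After a neutral reordering of `L`, the function `y` is applied directly after `x`, so that the
two may be merged into `y.comp x`. -/
def HasAdjacent (x y : LinFun) (L : List LinFun) : Prop :=
  ∃ P S, NeutralPerm (P ++ x :: y :: S) L

theorem IsPermMinimum.le_of_hasAdjacent (h : IsPermMinimum (P ++ y.comp x :: S))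
    (hL : L.Perm (P ++ x :: y :: S)) (hadj : HasAdjacent x y L) :
    (compList (P ++ x :: y :: S)).b ≤ (compList L).b := by
  obtain ⟨P', S', hp, hb⟩ := hadj
  rw [← hb, ← compList_merge, ← compList_merge]
  refine h _ (List.perm_middle.trans <| .trans ?_ List.perm_middle.symm)
  have hrest : (x :: y :: (P' ++ S')).Perm (x :: y :: (P ++ S)) :=
    ((List.perm_middle.trans (List.perm_middle.cons x)).symm.trans (hp.trans hL)).trans
      (List.perm_middle.trans (List.perm_middle.cons x))
  exact hrest.cons_inv.cons_inv.cons _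

namespace IsSwapMinimum

theorem hasAdjacent_of_sameRay (h : IsSwapMinimum (P ++ x :: S)) (hxa : 0 ≤ x.a)
    (hS : ∀ g ∈ S, 0 < g.a) (hx : x.vec ≠ 0) (hxy : SameRay ℝ x.vec y.vec)
    (hy : y ∈ P ∨ y ∈ S) : HasAdjacent x y (P ++ x :: S) := by
  rcases hy with hy | hy
  · obtain ⟨P, Q, rfl⟩ := List.append_of_mem hy
    rw [List.append_assoc, List.cons_append] at h ⊢
    refine ⟨P ++ Q, S, ?_⟩
    rw [List.append_assoc]
    exact h.neutralPerm_move_right hxa hS hxy.symm hx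
  · obtain ⟨Q, S, rfl⟩ := List.append_of_mem hy
    exact ⟨P, Q ++ S, h.neutralPerm_move_left (fun g hg ↦ hS g (by simp_all)) hxy hx⟩

theorem hasAdjacent_of_sameRay_next (h : IsSwapMinimum (P ++ x :: w :: S))
    (hwS : ∀ g ∈ w :: S, 0 < g.a) (hw : w.vec ≠ 0) (hyw : SameRay ℝ y.vec w.vec)
    (hy : y ∈ P ∨ y ∈ S) : HasAdjacent x y (P ++ x :: w :: S) := by
  have hwa : 0 < w.a := hwS w (by simp)
  have hS : ∀ g ∈ S, 0 < g.a := fun g hg ↦ hwS g (List.mem_cons_of_mem w hg)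
  have hswap := wedge_eq_zero_of_sameRay hyw.symm
  rcases hy with hy | hy
  · obtain ⟨P, Q, rfl⟩ := List.append_of_mem hy
    have hmove := neutralPerm_move_right (P := P) (Q := Q ++ [x]) (x := w) (by simpa using h)
      hwa.le hS hyw hw
    exact ⟨P ++ Q, w :: S, by
      simpa using (neutralPerm_swap_pair (P := P ++ Q ++ [x]) hswap).trans (by simpa using hmove)⟩
  · obtain ⟨Q, S, rfl⟩ := List.append_of_mem hy
    have hmove := neutralPerm_move_left (P := P ++ [x]) (x := w) (by simpa using h)
      (fun g hg ↦ hS g (by simp_all)) hyw.symm hw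
    exact ⟨P, w :: (Q ++ S), by
      simpa using (neutralPerm_swap_pair (P := P ++ [x]) hswap).trans (by simpa using hmove)⟩

theorem hasAdjacent_of_wedge_pos {P' S' : List LinFun} (h : IsSwapMinimum (P ++ x :: y :: S))
    (h' : IsSwapMinimum (P' ++ x :: w :: S')) (hp : (P' ++ x :: w :: S').Perm (P ++ x :: y :: S))
    (hx : 0 ≤ x.a) (hyS : ∀ g ∈ y :: S, 0 < g.a) (hwS : ∀ g ∈ w :: S', 0 < g.a)
    (hxy : 0 < wedge x.vec y.vec) (hxw : 0 < wedge x.vec w.vec) :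
    HasAdjacent x y (P' ++ x :: w :: S') := by
  have hwy := h.wedge_nonpos_of_mem hx hyS hxy (hp.mem_iff.1 (by simp)) hxw
  have hyw := h'.wedge_nonpos_of_mem hx hwS hxw (hp.mem_iff.2 (by simp)) hxy
  have hyw_zero : wedge y.vec w.vec = 0 := le_antisymm hyw (by rw [← neg_wedge]; linarith)
  have hw_ne : w.vec ≠ 0 := fun hw ↦ by simp [hw, wedge] at hxw
  have hy : y ∈ P' ++ x :: w :: S' := hp.mem_iff.2 (by simp)
  simp only [List.mem_append, List.mem_cons] at hy
  have hray := sameRay_of_wedge_eq_zero hyw_zero hxy hxw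
  rcases hy with hy | rfl | rfl | hy
  · exact h'.hasAdjacent_of_sameRay_next hwS hw_ne hray (.inl hy)
  · exact absurd (wedge_self _) hxy.ne'
  · exact ⟨P', S', .refl _, rfl⟩
  · exact h'.hasAdjacent_of_sameRay_next hwS hw_ne hray (.inr hy)

theorem wedge_nonneg_of_a_eq_zero {g : LinFun} (h : IsSwapMinimum (P ++ x :: S)) (hx : x.a = 0)
    (hS : ∀ g ∈ S, 0 < g.a) (hg : g ∈ P) : 0 ≤ wedge g.vec x.vec := by
  obtain ⟨P, Q, rfl⟩ := List.append_of_mem hg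
  simpa [vec_compList_append, compList_singleton, hx] using
    h.wedge_nonneg P [g] (Q ++ [x]) S (by simp) hS

theorem isPermMinimum_of_a_eq_zero (h : IsSwapMinimum (P ++ x :: S))
    (hL : ∀ g ∈ P ++ x :: S, 0 ≤ g.a) (hS : ∀ g ∈ S, 0 < g.a) (hx : x.a = 0)
    (hxS : ∀ g ∈ S, wedge x.vec g.vec = 0) : IsPermMinimum (P ++ x :: S) := by
  intro L' hp
  have heval : ∀ g ∈ P ++ x :: S, x.b ≤ g.eval x.b := by
    intro g hg
    rw [← sub_nonneg, ← wedge_vec_of_a_eq_zero hx]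
    simp only [List.mem_append, List.mem_cons] at hg
    rcases hg with hg | rfl | hg
    · exact h.wedge_nonneg_of_a_eq_zero hx hS hg
    · exact (wedge_self _).ge
    · rw [← neg_wedge, hxS g hg, neg_zero]
  calc (compList (P ++ x :: S)).b
      ≤ (compList (P ++ S ++ [x])).b := by simpa using h P [x] S [] (by simp)
    _ = x.b := by rw [compList_concat]; simp [comp, hx]
    _ ≤ (compList L').eval x.b := le_compList_eval
        (fun g hg ↦ hL g (hp.mem_iff.1 hg)) fun g hg ↦ heval g (hp.mem_iff.1 hg)
    _ = (compList L').b := compList_eval_of_mem_a_eq_zero (hp.mem_iff.2 (by simp)) hx _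

end IsSwapMinimum

theorem isPermMinimum_cons_of_wedge_eq_zero (hx : x.vec ≠ 0)
    (hxS : ∀ g ∈ S, wedge x.vec g.vec = 0) : IsPermMinimum (x :: S) := by
  have hx_wedge : ∀ g ∈ x :: S, wedge x.vec g.vec = 0 :=
    List.forall_mem_cons.2 ⟨wedge_self _, hxS⟩
  intro L' hp
  rw [compList_eq_of_perm hp fun f hf g hg ↦
    wedge_eq_zero_of_wedge_eq_zero hx (hx_wedge f hf) (hx_wedge g hg)]

theorem isPermMinimum_idf_cons (hS : IsPermMinimum S) : IsPermMinimum (idf :: S) := by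
  intro L' hp
  obtain ⟨P, T, rfl⟩ := List.append_of_mem (hp.mem_iff.2 List.mem_cons_self)
  simpa [compList_append, compList_cons, comp_idf] using
    hS (P ++ T) (List.perm_middle.symm.trans hp).cons_inv

theorem IsPermMinimum.exists_neutralPerm_wedge_pos (h : IsPermMinimum (P ++ x :: S))
    (hS : ∀ g ∈ S, 0 < g.a) :
    ∃ Q T, NeutralPerm (Q ++ x :: T) (P ++ x :: S) ∧ (∀ g ∈ T, 0 < g.a) ∧
      ∀ w ∈ T.head?, 0 < wedge x.vec w.vec := by
  induction S generalizing P with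
  | nil => exact ⟨P, [], ⟨.refl _, rfl⟩, by simp, by simp⟩
  | cons w S ih =>
    have hS' : ∀ g ∈ S, 0 < g.a := fun g hg ↦ hS g (List.mem_cons_of_mem w hg)
    have hxw := h.isSwapMinimum.wedge_nonneg P [x] [w] S (by simp) hS'
    simp only [compList_singleton] at hxw
    rcases hxw.eq_or_lt with hxw | hxw
    · have hswap := neutralPerm_swap_pair (P := P) (S := S) hxw.symm
      obtain ⟨Q, T, hQT, hT⟩ := ih (P := P ++ [w])
        (by simpa using h.of_perm_of_le hswap.1 hswap.2.le) hS'
      exact ⟨Q, T, hQT.trans (by simpa using hswap), hT⟩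
    · exact ⟨P, w :: S, ⟨.refl _, rfl⟩, hS, by simpa using hxw⟩

namespace IsSwapMinimum

theorem wedge_eq_zero_of_not_sameRay (h : IsSwapMinimum (P ++ x :: y :: S))
    (hS : ∀ g ∈ S, 0 < g.a) (hx : x.vec ≠ 0) (hxy : wedge x.vec y.vec = 0)
    (hray : ¬ SameRay ℝ x.vec y.vec) (hk : k ∈ S) : wedge x.vec k.vec = 0 := by
  have hopp := (sameRay_or_sameRay_neg_of_wedge_eq_zero hx hxy).resolve_left hray
  have hy : -y.vec ≠ 0 := fun hy ↦ hray (neg_eq_zero.1 hy ▸ SameRay.zero_right _)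
  have hprefix (Q R : List LinFun) (hQR : S = Q ++ R) : wedge x.vec (compList Q).vec = 0 := by
    have hR : ∀ g ∈ R, 0 < g.a := fun g hg ↦ hS g (by simp [hQR, hg])
    have hy_Q := h.wedge_nonneg (P ++ [x]) [y] Q R (by simp [hQR]) hR
    have hx_yQ := h.wedge_nonneg P [x] ([y] ++ Q) R (by simp [hQR]) hR
    simp only [vec_compList_append, compList_singleton, wedge_add_right, wedge_smul_right, hxy,
      mul_zero, zero_add] at hy_Q hx_yQ
    refine wedge_eq_zero_of_sameRay_left hopp hy hx_yQ ?_
    rwa [← neg_one_smul ℝ, wedge_smul_right, neg_one_mul, neg_wedge]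
  obtain ⟨Q, R, hQR⟩ := List.append_of_mem hk
  have hQk := hprefix (Q ++ [k]) R (by simp [hQR])
  rwa [vec_compList_append, compList_singleton, wedge_add_right, wedge_smul_right,
    hprefix Q (k :: R) hQR, mul_zero, zero_add] at hQk

theorem le_of_perm_concat (h : IsSwapMinimum (P ++ x :: S)) (hxa : 0 ≤ x.a)
    (hpivot : x.a = 0 ∨ P = [] ∧ IsPermMinimum S) (hp : (Q ++ [x]).Perm (P ++ x :: S)) :
    (compList (P ++ x :: S)).b ≤ (compList (Q ++ [x])).b := by
  have hlast : x.a * (compList (P ++ S)).b ≤ x.a * (compList Q).b := by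
    rcases hpivot with hx | ⟨rfl, hS⟩
    · rw [hx, zero_mul, zero_mul]
    · refine mul_le_mul_of_nonneg_left (hS Q ?_) hxa
      exact ((List.perm_append_singleton x Q).symm.trans hp).cons_inv
  calc (compList (P ++ x :: S)).b
      ≤ (compList (P ++ S ++ [x])).b := by simpa using h P [x] S [] (by simp)
    _ = x.a * (compList (P ++ S)).b + x.b := by rw [compList_concat]; rfl
    _ ≤ x.a * (compList Q).b + x.b := by gcongr
    _ = (compList (Q ++ [x])).b := by rw [compList_concat]; rfl

theorem hasAdjacent_or_wedge_eq_zero {P' S' : List LinFun} (h : IsSwapMinimum (P ++ x :: y :: S))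
    (h' : IsSwapMinimum (P' ++ x :: w :: S')) (hp : (P' ++ x :: w :: S').Perm (P ++ x :: y :: S))
    (hxa : 0 ≤ x.a) (hyS : ∀ g ∈ y :: S, 0 < g.a) (hwS : ∀ g ∈ w :: S', 0 < g.a)
    (hx : x.vec ≠ 0) (hxw : 0 < wedge x.vec w.vec) :
    HasAdjacent x y (P' ++ x :: w :: S') ∨ ∀ g ∈ y :: S, wedge x.vec g.vec = 0 := by
  have hS : ∀ g ∈ S, 0 < g.a := fun g hg ↦ hyS g (List.mem_cons_of_mem y hg)
  have hxy := h.wedge_nonneg P [x] [y] S (by simp) hS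
  simp only [compList_singleton] at hxy
  rcases hxy.eq_or_lt' with hxy | hxy
  · by_cases hray : SameRay ℝ x.vec y.vec
    · have hrest := ((List.perm_middle.symm.trans hp).trans List.perm_middle).cons_inv
      exact .inl <| h'.hasAdjacent_of_sameRay hxa hwS hx hray <|
        List.mem_append.1 (hrest.mem_iff.2 (by simp))
    · exact .inr <| List.forall_mem_cons.2
        ⟨hxy, fun k hk ↦ h.wedge_eq_zero_of_not_sameRay hS hx hxy hray hk⟩
  · exact .inl <| h.hasAdjacent_of_wedge_pos h' hp hxa hyS hwS hxy hxw

theorem isPermMinimum_of_pivot {P' S' : List LinFun} (h : IsSwapMinimum (P ++ x :: S))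
    (hL : ∀ g ∈ P ++ x :: S, 0 ≤ g.a) (hS : ∀ g ∈ S, 0 < g.a) (hx : x.vec ≠ 0)
    (hpivot : x.a = 0 ∨ P = [] ∧ IsPermMinimum S)
    (hmerge : ∀ y T, S = y :: T → IsPermMinimum (P ++ y.comp x :: T))
    (h' : IsPermMinimum (P' ++ x :: S')) (hS' : ∀ g ∈ S', 0 < g.a)
    (hp : (P' ++ x :: S').Perm (P ++ x :: S)) : IsPermMinimum (P ++ x :: S) := by
  have hxa : 0 ≤ x.a := hL x (by simp)
  obtain ⟨Q, T, hQT, hT, hhead⟩ := h'.exists_neutralPerm_wedge_pos hS'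
  have hQTp := hQT.1.trans hp
  have hQTmin := h'.of_perm_of_le hQT.1 hQT.2.le
  have hparallel (hxS : ∀ g ∈ S, wedge x.vec g.vec = 0) : IsPermMinimum (P ++ x :: S) := by
    rcases hpivot with hxa | ⟨rfl, -⟩
    · exact h.isPermMinimum_of_a_eq_zero hL hS hxa hxS
    · exact isPermMinimum_cons_of_wedge_eq_zero hx hxS
  rcases T with _ | ⟨w, T⟩
  · exact hQTmin.of_perm_of_le hQTp.symm (h.le_of_perm_concat hxa hpivot hQTp)
  rcases S with _ | ⟨y, S⟩
  · exact hparallel (by simp)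
  rcases h.hasAdjacent_or_wedge_eq_zero hQTmin.isSwapMinimum hQTp hxa hS hT hx
    (hhead w rfl) with hadj | hxS
  · exact hQTmin.of_perm_of_le hQTp.symm ((hmerge y S rfl).le_of_hasAdjacent hQTp hadj)
  · exact hparallel hxS

end IsSwapMinimum

theorem exists_eq_append_cons_of_a_eq_zero (hL : ∀ g ∈ L, 0 ≤ g.a) (h0 : ∃ g ∈ L, g.a = 0) :
    ∃ P x S, L = P ++ x :: S ∧ x.a = 0 ∧ ∀ g ∈ S, 0 < g.a := by
  induction L with
  | nil => simp at h0
  | cons z L ih =>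
    rw [List.forall_mem_cons] at hL
    by_cases hzero : ∃ g ∈ L, g.a = 0
    · obtain ⟨P, x, S, rfl, hx⟩ := ih hL.2 hzero
      exact ⟨z :: P, x, S, rfl, hx⟩
    · have hz : z.a = 0 ∨ ∃ g ∈ L, g.a = 0 := by simpa using h0
      exact ⟨[], z, L, rfl, hz.resolve_right hzero,
        fun g hg ↦ (hL.2 g hg).lt_of_ne' fun hg0 ↦ hzero ⟨g, hg, hg0⟩⟩

namespace IsSwapMinimum

/-- By local optimality, the value of `x` is at most that of any other zero-slope function, hence
moving `x` after the last zero-slope function of an optimal list keeps the list optimal. -/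
theorem exists_isPermMinimum_pivot (h : IsSwapMinimum (P ++ x :: S))
    (hL : ∀ g ∈ P ++ x :: S, 0 ≤ g.a) (hS : ∀ g ∈ S, 0 < g.a) (hx : x.a = 0) :
    ∃ P' S', (P' ++ x :: S').Perm (P ++ x :: S) ∧ IsPermMinimum (P' ++ x :: S') ∧
      ∀ g ∈ S', 0 < g.a := by
  obtain ⟨M, hM, hmin⟩ := exists_isPermMinimum (P ++ x :: S)
  obtain ⟨Q, z, T, rfl, hz, hT⟩ := exists_eq_append_cons_of_a_eq_zero
    (fun g hg ↦ hL g (hM.mem_iff.1 hg)) ⟨x, hM.mem_iff.2 (by simp), hx⟩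
  have hxM : x ∈ Q ++ z :: T := hM.mem_iff.2 (by simp)
  have hzL : z ∈ P ++ x :: S := hM.mem_iff.1 (by simp)
  simp only [List.mem_append, List.mem_cons] at hxM hzL
  rcases hzL with hzP | rfl | hzS
  · rcases hxM with hxQ | rfl | hxT
    · obtain ⟨Q, R, rfl⟩ := List.append_of_mem hxQ
      have hmove := compList_swap_b Q [x] (R ++ [z]) T
      have hperm := perm_swap_blocks Q [x] (R ++ [z]) T
      have hzx : 0 ≤ wedge z.vec x.vec := h.wedge_nonneg_of_a_eq_zero hx hS hzP
      rw [vec_compList_append, compList_singleton, compList_singleton, hz, zero_smul, zero_add,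
        ← neg_wedge] at hmove
      have hTa := compList_a_pos hT
      have hle : (compList (Q ++ (R ++ [z]) ++ [x] ++ T)).b ≤
          (compList (Q ++ [x] ++ (R ++ [z]) ++ T)).b := by
        rw [hmove]
        nlinarith
      refine ⟨Q ++ (R ++ [z]), T, ?_, ?_, hT⟩
      · exact .trans (by simpa using hperm) hM
      · simpa using hmin.of_perm_of_le (by simpa using hperm) (by simpa using hle)
    · exact ⟨Q, T, hM, hmin, hT⟩
    · exact absurd hx (hT x hxT).ne'
  · exact ⟨Q, T, hM, hmin, hT⟩
  · exact absurd hz (hS z hzS).ne'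

theorem isPermMinimum (h : IsSwapMinimum L) (hL : ∀ g ∈ L, 0 ≤ g.a) : IsPermMinimum L := by
  induction hn : L.length using Nat.strong_induction_on generalizing L with
  | _ n ih =>
  have hmerge (P x S) (hPS : L = P ++ x :: S) (y T) (hyT : S = y :: T) :
      IsPermMinimum (P ++ y.comp x :: T) := by
    subst hPS hyT
    refine ih _ (by simp [← hn]) h.merge ?_ rfl
    simp only [List.forall_mem_append, List.forall_mem_cons] at hL ⊢
    exact ⟨hL.1, mul_nonneg hL.2.2.1 hL.2.1, hL.2.2.2⟩
  by_cases hzero : ∃ g ∈ L, g.a = 0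
  · obtain ⟨P, x, S, rfl, hx, hS⟩ := exists_eq_append_cons_of_a_eq_zero hL hzero
    obtain ⟨P', S', hp, hmin, hS'⟩ := h.exists_isPermMinimum_pivot hL hS hx
    exact h.isPermMinimum_of_pivot hL hS (vec_ne_zero_of_a_eq_zero hx) (.inl hx)
      (hmerge P x S rfl) hmin hS' hp
  push Not at hzero
  have hpos : ∀ g ∈ L, 0 < g.a := fun g hg ↦ (hL g hg).lt_of_ne' (hzero g hg)
  rcases L with _ | ⟨x, S⟩
  · exact fun L' hp ↦ by rw [hp.eq_nil]
  have hSmin : IsPermMinimum S := ih S.length (by simp [← hn])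
    (of_append (Q := [x]) h) (List.forall_mem_cons.1 hL).2 rfl
  by_cases hx : x.vec = 0
  · rw [vec_eq_zero_iff.1 hx]
    exact isPermMinimum_idf_cons hSmin
  obtain ⟨M, hp, hmin⟩ := exists_isPermMinimum (x :: S)
  obtain ⟨P', S', rfl⟩ := List.append_of_mem (hp.mem_iff.2 List.mem_cons_self)
  exact isPermMinimum_of_pivot (P := []) h hL (List.forall_mem_cons.1 hpos).2 hx
    (.inr ⟨rfl, hSmin⟩) (hmerge [] x S rfl) hmin
    (fun g hg ↦ hpos g (hp.mem_iff.1 (by simp [hg]))) hp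

end IsSwapMinimum

end Minimality

section Permutations

variable {n : ℕ}

theorem exists_perm_ofFn_eq {σ : Equiv.Perm (Fin n)} {M : List (Fin n)}
    (hM : M.Perm (List.ofFn σ)) : ∃ μ : Equiv.Perm (Fin n), List.ofFn μ = M := by
  have hlen : M.length = n := by simpa using hM.length_eq
  have hnodup : M.Nodup := hM.nodup_iff.2 (List.nodup_ofFn.2 σ.injective)
  have hinj : Function.Injective fun i : Fin n ↦ M[i] := fun i j hij ↦
    Fin.ext (hnodup.getElem_inj_iff.1 hij)
  exact ⟨.ofBijective _ (Finite.injective_iff_bijective.1 hinj),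
    List.ext_getElem (by simp [hlen]) (by simp)⟩

theorem inNbhd_of_ofFn_eq_append {σ μ : Equiv.Perm (Fin n)} {P A B S : List (Fin n)}
    (hσ : List.ofFn σ = P ++ A ++ B ++ S) (hμ : List.ofFn μ = P ++ B ++ A ++ S) (hA : A ≠ [])
    (hB : B ≠ []) : InNbhd σ μ := by
  have hlen : n = P.length + A.length + B.length + S.length := by
    simpa [add_assoc] using congrArg List.length hσ
  have hApos := List.length_pos_of_ne_nil hA
  have hBpos := List.length_pos_of_ne_nil hB
  have hσ' (i : Fin n) : some (σ i) = (P ++ A ++ B ++ S)[i.val]? := by rw [← hσ]; simp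
  have hμ' (i : Fin n) : some (μ i) = (P ++ B ++ A ++ S)[i.val]? := by rw [← hμ]; simp
  refine ⟨P.length, P.length + A.length - 1, P.length + A.length + B.length - 1, by omega,
    by omega, by omega, fun i hi ↦ ?_, fun i hi hi' ↦ ?_, fun i hi hi' ↦ ?_⟩ <;>
    · apply Option.some_injective
      rw [hσ', hμ']
      grind

theorem permList_eq_map (f : Fin n → LinFun) (σ : Equiv.Perm (Fin n)) :
    permList f σ = (List.ofFn σ).map f :=
  List.map_ofFn.symm

theorem permList_perm (f : Fin n → LinFun) (σ ρ : Equiv.Perm (Fin n)) :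
    (permList f ρ).Perm (permList f σ) := by
  rw [permList_eq_map, permList_eq_map]
  exact .map f ((Equiv.Perm.ofFn_comp_perm ρ id).trans (Equiv.Perm.ofFn_comp_perm σ id).symm)

theorem LocallyOptimal.isSwapMinimum {f : Fin n → LinFun} {σ : Equiv.Perm (Fin n)}
    (h : LocallyOptimal f σ) : IsSwapMinimum (permList f σ) := by
  intro P A B S hPABS
  rw [permList_eq_map] at hPABS ⊢
  obtain ⟨_, S, hσ, hPAB, rfl⟩ := List.map_eq_append_iff.1 hPABS
  obtain ⟨_, B, rfl, hPA, rfl⟩ := List.map_eq_append_iff.1 hPAB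
  obtain ⟨P, A, rfl, rfl, rfl⟩ := List.map_eq_append_iff.1 hPA
  rcases eq_or_ne A [] with rfl | hA
  · simp [hσ]
  rcases eq_or_ne B [] with rfl | hB
  · simp [hσ]
  obtain ⟨μ, hμ⟩ := exists_perm_ofFn_eq (hσ ▸ perm_swap_blocks P A B S)
  simpa only [permComp, permList_eq_map, hμ, List.map_append] using
    h μ (inNbhd_of_ofFn_eq_append hσ hμ hA hB)

theorem IsPermMinimum.isMinimum {f : Fin n → LinFun} {σ : Equiv.Perm (Fin n)}
    (h : IsPermMinimum (permList f σ)) : IsMinimum f σ :=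
  fun ρ ↦ h _ (permList_perm f σ ρ)

end Permutations

/-- global optimality is equivalent to local optimality for monotone
nondecreasing linear functions. -/
theorem stmt17 {n : ℕ} (f : Fin n → LinFun) (hf : ∀ i, 0 ≤ (f i).a)
    (σ : Equiv.Perm (Fin n)) :
    IsMinimum f σ ↔ LocallyOptimal f σ := by
  refine ⟨fun h μ _ ↦ h μ, fun h ↦ ?_⟩
  have hnonneg : ∀ g ∈ permList f σ, 0 ≤ g.a := List.forall_mem_ofFn_iff.2 fun i ↦ hf (σ i)
  exact (h.isSwapMinimum.isPermMinimum hnonneg).isMinimum
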